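/- arXiv:2309.07744 — 2 statements merged into one kernel-verified Lean document; each statement's English description precedes it below -/
import Mathlib

section
/- For every integer d ≥ 2 and every ε > 0 there exists a threshold Q such that for every prime power q ≥ Q, the number of subsets of 𝔽_q^d that are in general position is at most 2^{q + q^{2d/(2d+1) + ε}}. -/
/-- A set `P ⊆ 𝔽_q^d` is in general position if every `(d+1)`-element subset of `P`
is affinely independent. -/
def IsGenPos (F : Type*) [Field F] (d : ℕ) (P : Set (Fin d → F)) : Prop :=
  ∀ s : Finset (Fin d → F), (↑s : Set (Fin d → F)) ⊆ P → s.card = d + 1 →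
    AffineIndependent F ((↑) : s → (Fin d → F))

/-!
Lift `𝔽_q^d` to the hyperplane at height `1` in dimension `d + 1`: point sets in general position
become linear arcs. With `k = d - 1`, fix inside a large arc an array `T` of `k` rows of `s`
vectors, and call `x`, `y` in conflict if some transversal of `T` together with `x` spans `y`; the
remaining vectors of the arc are then pairwise free of conflicts.

There are many conflicts. The quotient by the span of a transversal has dimension two, and a set of
more than `q + 1` vectors has many pairs mapped to equal points of its projective line. On the other
hand a pair is caught by at most a fraction `k / s` of all transversals: if `y` is a combination of
`x` and a transversal with nonzero coefficient in row `j`, exchanging the entry of that row destroys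
the relation. So every set of more than `q + 1 + D` admissible vectors spans a conflict graph of
density of order `s * D / (k * q ^ 2)`.

The Kleitman–Winston algorithm then counts the independent sets of the conflict graph. Choosing
`s = D ≈ q ^ (2 / 3)` bounds the logarithm of the count by `q + O(q ^ (2 / 3) * (log q) ^ 2)`.
-/

open Finset Module Projectivization
open scoped LinearAlgebra.Projectivization

/-- The subsets of `V` that are independent in the digraph with edge relation `r`, loops being
ignored. -/
def indepSets {α : Type*} [DecidableEq α] (r : α → α → Prop) [DecidableRel r] (V : Finset α) :
    Finset (Finset α) :=
  {I ∈ V.powerset | (I : Set α).Pairwise fun x y => ¬ r x y}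

section IndepSets

variable {α : Type*} [DecidableEq α] {r : α → α → Prop} [DecidableRel r] {V : Finset α}

lemma mem_indepSets {I : Finset α} :
    I ∈ indepSets r V ↔ I ⊆ V ∧ (I : Set α).Pairwise fun x y => ¬ r x y := by
  simp [indepSets]

lemma card_indepSets_le_two_pow : #(indepSets r V) ≤ 2 ^ #V :=
  (card_filter_le _ _).trans_eq (card_powerset V)

lemma card_indepSets_le_erase_add {v : α} :
    #(indepSets r V) ≤
      #(indepSets r (V.erase v)) + #(indepSets r {y ∈ V.erase v | ¬ r v y}) := by
  have hsplit : indepSets r V ⊆ indepSets r (V.erase v) ∪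
      (indepSets r {y ∈ V.erase v | ¬ r v y}).image (insert v) := by
    intro I hI
    obtain ⟨hIV, hI⟩ := mem_indepSets.1 hI
    rw [mem_union, mem_image]
    by_cases hv : v ∈ I
    · refine .inr ⟨I.erase v, mem_indepSets.2 ⟨fun y hy => ?_, hI.mono ?_⟩, insert_erase hv⟩
      · obtain ⟨hyv, hyI⟩ := mem_erase.1 hy
        exact mem_filter.2 ⟨mem_erase.2 ⟨hyv, hIV hyI⟩, hI hv hyI hyv.symm⟩
      · exact coe_subset.2 (erase_subset v I)
    · exact .inl (mem_indepSets.2 ⟨subset_erase.2 ⟨hIV, hv⟩, hI⟩)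
  exact (card_le_card hsplit).trans
    ((card_union_le _ _).trans (Nat.add_le_add_left card_image_le _))

lemma sum_card_filter_erase_eq_card_filter_offDiag (r : α → α → Prop) [DecidableRel r]
    (V : Finset α) : ∑ v ∈ V, #{y ∈ V.erase v | r v y} = #{z ∈ V.offDiag | r z.1 z.2} := by
  rw [card_eq_sum_card_fiberwise (f := Prod.fst) (t := V) fun z hz => by grind]
  refine sum_congr rfl fun v hv => card_nbij' (fun y => (v, y)) Prod.snd ?_ ?_ ?_ ?_ <;>
    simp only [Set.MapsTo, Set.LeftInvOn, mem_coe] <;> grind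

lemma exists_card_filter_erase_ge {β : ℝ} (hV : V.Nonempty)
    (h : β * #V ^ 2 ≤ #{z ∈ V.offDiag | r z.1 z.2}) :
    ∃ v ∈ V, β * #V ≤ #{y ∈ V.erase v | r v y} := by
  refine exists_le_of_sum_le hV ?_
  rw [← Nat.cast_sum, sum_card_filter_erase_eq_card_filter_offDiag, sum_const, nsmul_eq_mul]
  linarith

lemma card_filter_not_le_mul_exp_neg {v : α} {β : ℝ} (hv : β * #V ≤ #{y ∈ V.erase v | r v y}) :
    #{y ∈ V.erase v | ¬ r v y} ≤ #V * Real.exp (-β) := by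
  have hsplit : (#{y ∈ V.erase v | r v y} : ℝ) + #{y ∈ V.erase v | ¬ r v y} ≤ #V := by
    exact_mod_cast (card_filter_add_card_filter_not _).trans_le (card_erase_le (a := v))
  calc (#{y ∈ V.erase v | ¬ r v y} : ℝ) ≤ #V * (-β + 1) := by linarith
    _ ≤ #V * Real.exp (-β) := by gcongr; exact Real.add_one_le_exp _

-- Kleitman–Winston: branching on a vertex of large degree shrinks the ground set by a factor
-- `exp (-β)` each time the vertex is taken, so it is taken at most `t` times before the ground set
-- has at most `M` elements.
theorem card_indepSets_le {M t : ℕ} {β : ℝ}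
    (h : ∀ S ⊆ V, M < #S → β * #S ^ 2 ≤ #{z ∈ S.offDiag | r z.1 z.2})
    (ht : #V * Real.exp (-(β * t)) ≤ M) :
    #(indepSets r V) ≤ 2 ^ M * (#V + 1) ^ t := by
  induction V using Finset.strongInduction generalizing t with
  | H V ih =>
  obtain hM | hM := le_or_gt #V M
  · calc #(indepSets r V) ≤ 2 ^ #V := card_indepSets_le_two_pow
      _ ≤ 2 ^ M := Nat.pow_le_pow_right two_pos hM
      _ ≤ _ := Nat.le_mul_of_pos_right _ (by positivity)
  obtain ⟨v, hv, hdeg⟩ :=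
    exists_card_filter_erase_ge (card_pos.1 (M.zero_le.trans_lt hM)) (h V subset_rfl hM)
  cases t with
  | zero =>
    simp only [CharP.cast_eq_zero, mul_zero, neg_zero, Real.exp_zero, mul_one, Nat.cast_le] at ht
    omega
  | succ t =>
  have hss : V.erase v ⊂ V := erase_ssubset hv
  have hss' : {y ∈ V.erase v | ¬ r v y} ⊂ V := (filter_subset _ _).trans_ssubset hss
  have hcard : #(V.erase v) + 1 = #V := card_erase_add_one hv
  have htake : #{y ∈ V.erase v | ¬ r v y} * Real.exp (-(β * t)) ≤ M := by
    calc #{y ∈ V.erase v | ¬ r v y} * Real.exp (-(β * t))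
        ≤ #V * Real.exp (-β) * Real.exp (-(β * t)) := by
          gcongr
          exact card_filter_not_le_mul_exp_neg hdeg
      _ = #V * Real.exp (-(β * (t + 1 : ℕ))) := by
        rw [mul_assoc, ← Real.exp_add]; push_cast; ring_nf
      _ ≤ M := ht
  have hskip : (#(V.erase v) : ℝ) * Real.exp (-(β * (t + 1 : ℕ))) ≤ M :=
    ht.trans' (by gcongr)
  calc #(indepSets r V) ≤ #(indepSets r (V.erase v)) + #(indepSets r {y ∈ V.erase v | ¬ r v y}) :=
        card_indepSets_le_erase_add
    _ ≤ 2 ^ M * (#(V.erase v) + 1) ^ (t + 1) + 2 ^ M * (#{y ∈ V.erase v | ¬ r v y} + 1) ^ t := by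
        gcongr
        · exact ih _ hss (fun S hS => h S (hS.trans hss.1)) hskip
        · exact ih _ hss' (fun S hS => h S (hS.trans hss'.1)) htake
    _ ≤ 2 ^ M * (#V * (#V + 1) ^ t) + 2 ^ M * (#V + 1) ^ t := by
        rw [hcard, pow_succ']
        gcongr
        exact Nat.le_succ _
    _ = 2 ^ M * (#V + 1) ^ (t + 1) := by ring

end IndepSets

lemma card_filter_card_le_le_pow {α : Type*} [Fintype α] (m : ℕ) :
    #{P : Finset α | #P ≤ m} ≤ (Fintype.card α + 1) ^ m := by
  classical
  induction m with
  | zero => simp [Finset.card_le_one]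
  | succ m ih =>
    have hsub : ({P | #P ≤ m + 1} : Finset (Finset α)) ⊆
        image₂ (fun (P : Finset α) (a : Option α) => P ∪ a.toFinset) {P | #P ≤ m} univ := by
      intro P hP
      rw [mem_image₂]
      obtain rfl | ⟨a, ha⟩ := P.eq_empty_or_nonempty
      · exact ⟨∅, by simp, none, mem_univ _, by simp⟩
      · refine ⟨P.erase a, ?_, some a, mem_univ _, ?_⟩
        · simpa [card_erase_of_mem ha] using hP
        · ext; grind [Option.toFinset_some]
    calc _ ≤ _ := card_le_card hsub
      _ ≤ #{P : Finset α | #P ≤ m} * #(univ : Finset (Option α)) := card_image₂_le _ _ _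
      _ ≤ (Fintype.card α + 1) ^ m * (Fintype.card α + 1) := by
        gcongr
        simp
      _ = _ := (pow_succ _ _).symm

open Classical in
lemma sq_card_le_card_mul_card_filter_eq {α β : Type*} [Fintype β] (S : Finset α) (f : α → β) :
    #S ^ 2 ≤ Fintype.card β * #{z ∈ S ×ˢ S | f z.1 = f z.2} := by
  have hS : #S = ∑ b, #{x ∈ S | f x = b} := card_eq_sum_card_fiberwise fun _ _ => by simp
  have hpairs : #{z ∈ S ×ˢ S | f z.1 = f z.2} = ∑ b, #{x ∈ S | f x = b} ^ 2 := by
    rw [card_eq_sum_card_fiberwise (f := fun z => f z.1) (t := univ) fun _ _ => by simp]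
    refine sum_congr rfl fun b _ => ?_
    rw [sq, ← card_product]
    congr 1
    grind
  rw [hpairs, hS]
  exact sq_sum_le_card_mul_sum_sq


open Classical in
lemma sq_card_le_card_projectivization_mul {F W : Type*} [Field F] [AddCommGroup W] [Module F W]
    (U : Submodule F W) [Finite (ℙ F (W ⧸ U))] {S : Finset W} (hS : ∀ x ∈ S, x ∉ U) :
    #S ^ 2 ≤ Nat.card (ℙ F (W ⧸ U)) * #{z ∈ S ×ˢ S | z.2 ∈ Submodule.span F {z.1} ⊔ U} := by
  have := Fintype.ofFinite (ℙ F (W ⧸ U))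
  let π (x : S) : ℙ F (W ⧸ U) := mk F (U.mkQ x) (by simpa using hS x x.2)
  have hπ (x y : S) (h : π x = π y) : (y : W) ∈ Submodule.span F {(x : W)} ⊔ U := by
    obtain ⟨a, ha⟩ := (mk_eq_mk_iff' F _ _ _ _).1 h.symm
    rw [← map_smul, Submodule.mkQ_apply, Submodule.mkQ_apply, eq_comm, Submodule.Quotient.eq] at ha
    exact Submodule.mem_sup.2 ⟨a • x, Submodule.smul_mem _ _ (Submodule.mem_span_singleton_self _),
      _, ha, add_sub_cancel _ _⟩
  have hpairs : #{z ∈ univ ×ˢ univ | π z.1 = π z.2} ≤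
      #{z ∈ S ×ˢ S | z.2 ∈ Submodule.span F {z.1} ⊔ U} := by
    refine card_le_card_of_injOn (Prod.map Subtype.val Subtype.val) (fun z hz => ?_)
      (Subtype.val_injective.prodMap Subtype.val_injective).injOn
    simpa using hπ z.1 z.2 (by simpa using hz)
  calc #S ^ 2 = #(univ : Finset S) ^ 2 := by simp
    _ ≤ Fintype.card (ℙ F (W ⧸ U)) * _ := sq_card_le_card_mul_card_filter_eq univ π
    _ ≤ _ := by rw [Nat.card_eq_fintype_card]; gcongr

lemma exists_notMem_span_insert_image_compl {F W ι : Type*} [Field F] [AddCommGroup W] [Module F W]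
    [Finite ι] {u : ι → W} {x y : W}
    (hu : ∀ j, u j ∉ Submodule.span F (insert x (u '' {j}ᶜ)))
    (hxy : y ∉ Submodule.span F {x}) (hy : y ∈ Submodule.span F (insert x (Set.range u))) :
    ∃ j, y ∉ Submodule.span F (insert x (u '' {j}ᶜ)) := by
  classical
  have := Fintype.ofFinite ι
  obtain ⟨a, z, hz, rfl⟩ := Submodule.mem_span_insert.1 hy
  obtain ⟨c, rfl⟩ := (Submodule.mem_span_range_iff_exists_fun F).1 hz
  obtain ⟨j, hj⟩ : ∃ j, c j ≠ 0 := by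
    by_contra! hc
    exact hxy (by simpa [hc] using
      Submodule.smul_mem _ a (Submodule.mem_span_singleton_self (R := F) x))
  refine ⟨j, fun hmem => hu j ((Submodule.smul_mem_iff _ hj).1 ?_)⟩
  have hx : a • x ∈ Submodule.span F (insert x (u '' {j}ᶜ)) :=
    Submodule.smul_mem _ _ (Submodule.subset_span (Set.mem_insert _ _))
  have hrest : ∑ i ∈ univ.erase j, c i • u i ∈ Submodule.span F (insert x (u '' {j}ᶜ)) :=
    Submodule.sum_mem _ fun i hi => Submodule.smul_mem _ _ <|
      Submodule.subset_span (.inr ⟨i, ne_of_mem_erase hi, rfl⟩)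
  rw [← add_sum_erase _ _ (mem_univ j)] at hmem
  simpa [add_assoc, hx, hrest] using
    (Submodule.add_mem_iff_left _ hrest).1 ((Submodule.add_mem_iff_right _ hx).1 hmem)

/-- An arc of strength `n`: any at most `n` vectors of `P` are linearly independent. -/
def IsArc (F : Type*) {W : Type*} [Field F] [AddCommGroup W] [Module F W] (n : ℕ) (P : Set W) :
    Prop :=
  ∀ A ⊆ P, A.encard ≤ n → LinearIndepOn F id A

/-- The choice function `r` selects one vector from each row of the array `T`. -/
def transversal {ι κ W : Type*} (T : ι × κ ↪ W) (r : ι → κ) (i : ι) : W :=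
  T (i, r i)

section Transversal

variable {ι κ W : Type*} {T : ι × κ ↪ W} {r : ι → κ}

lemma transversal_injective : Function.Injective (transversal T r) :=
  fun _ _ h => congrArg Prod.fst (T.injective h)

lemma range_transversal_subset : Set.range (transversal T r) ⊆ Set.range T :=
  Set.range_subset_iff.2 fun _ => Set.mem_range_self _

lemma encard_image_transversal_le [Fintype ι] (J : Set ι) :
    (transversal T r '' J).encard ≤ Fintype.card ι :=
  (Set.encard_image_le _ _).trans <| (Set.encard_le_encard (Set.subset_univ J)).trans_eq (by simp)

end Transversal

/-- The vector `x` can be adjoined to the array `T` as a new vector of an arc of strength `n`. -/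
def IsArcExtension (F : Type*) {ι κ W : Type*} [Field F] [AddCommGroup W] [Module F W] (n : ℕ)
    (T : ι × κ ↪ W) (x : W) : Prop :=
  x ∉ Set.range T ∧ IsArc F n (insert x (Set.range T))

/-- The conflict relation of the array `T`: no large enough arc contains both `T` and two distinct
vectors `x`, `y` outside of it in conflict. -/
def Conflict (F : Type*) {ι κ W : Type*} [Field F] [AddCommGroup W] [Module F W]
    (T : ι × κ ↪ W) (x y : W) : Prop :=
  ∃ r : ι → κ, y ∈ Submodule.span F (insert x (Set.range (transversal T r)))

section Arc

variable {F W : Type*} [Field F] [AddCommGroup W] [Module F W] {n : ℕ} {P Q : Set W}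

lemma IsArc.subset (h : IsArc F n P) (hQ : Q ⊆ P) : IsArc F n Q :=
  fun A hA => h A (hA.trans hQ)

lemma IsArc.notMem_span (h : IsArc F n P) {A : Set W} (hA : A ⊆ P) (hn : A.encard < n) {z : W}
    (hz : z ∈ P) (hzA : z ∉ A) : z ∉ Submodule.span F A := by
  have hins : (insert z A).encard ≤ n := by
    rw [Set.encard_insert_of_notMem hzA]
    exact Order.add_one_le_of_lt hn
  exact ((linearIndepOn_id_insert hzA).1 (h _ (Set.insert_subset hz hA) hins)).2

variable {ι κ : Type*} [Fintype ι] {T : ι × κ ↪ W} {x y : W} {r : ι → κ}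

lemma IsArc.notMem_span_insert_transversal (h : IsArc F n P) (hn : Fintype.card ι + 1 < n)
    (hT : Set.range T ⊆ P) (hx : x ∈ P) (hy : y ∈ P) (hyx : y ≠ x) {J : Set ι}
    (hyT : y ∉ transversal T r '' J) :
    y ∉ Submodule.span F (insert x (transversal T r '' J)) := by
  refine h.notMem_span (Set.insert_subset hx ?_) ?_ hy (by simp_all)
  · exact (Set.image_subset_range _ _).trans (range_transversal_subset.trans hT)
  · calc _ ≤ (transversal T r '' J).encard + 1 := Set.encard_insert_le _ _
      _ ≤ (Fintype.card ι + 1 : ℕ) := by push_cast; gcongr; exact encard_image_transversal_le J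
      _ < n := mod_cast hn

lemma IsArc.not_conflict (h : IsArc F n P) (hn : Fintype.card ι + 1 < n) (hT : Set.range T ⊆ P)
    (hx : x ∈ P) (hy : y ∈ P) (hyT : y ∉ Set.range T) (hyx : y ≠ x) : ¬ Conflict F T x y := by
  rintro ⟨r, hr⟩
  rw [← Set.image_univ] at hr
  refine h.notMem_span_insert_transversal hn hT hx hy hyx (fun hy => hyT ?_) hr
  exact range_transversal_subset (Set.image_subset_range _ _ hy)

lemma IsArcExtension.apply_notMem_span (h : IsArcExtension F n T x) (hn : Fintype.card ι + 1 < n)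
    {J : Set ι} {j : ι} {b : κ} (hb : j ∈ J → r j ≠ b) :
    T (j, b) ∉ Submodule.span F (insert x (transversal T r '' J)) := by
  refine h.2.notMem_span_insert_transversal hn (Set.subset_insert _ _) (Set.mem_insert _ _)
    (.inr (Set.mem_range_self _)) (fun hx => h.1 ⟨_, hx⟩) ?_
  rintro ⟨i, hi, hij⟩
  obtain ⟨rfl, rfl⟩ := Prod.ext_iff.1 (T.injective hij)
  exact hb hi rfl

lemma IsArcExtension.notMem_span (h : IsArcExtension F n T x) (hn : Fintype.card ι < n) :
    x ∉ Submodule.span F (Set.range (transversal T r)) := by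
  refine h.2.notMem_span (range_transversal_subset.trans (Set.subset_insert _ _)) ?_
    (Set.mem_insert _ _) fun hx => h.1 (range_transversal_subset hx)
  rw [← Set.image_univ]
  exact (encard_image_transversal_le _).trans_lt (mod_cast hn)

lemma IsArcExtension.finrank_span (h : IsArcExtension F n T x) (hn : Fintype.card ι ≤ n) :
    finrank F (Submodule.span F (Set.range (transversal T r))) = Fintype.card ι := by
  refine finrank_span_eq_card ((linearIndepOn_id_range_iff transversal_injective).1 ?_)
  refine h.2 _ (range_transversal_subset.trans (Set.subset_insert _ _)) ?_
  rw [← Set.image_univ]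
  exact (encard_image_transversal_le _).trans (mod_cast hn)

lemma IsArcExtension.apply_eq_of_mem_span (h : IsArcExtension F n T x)
    (hn : Fintype.card ι + 1 < n) {r' : ι → κ} {j : ι} (hrr' : ∀ i ≠ j, r i = r' i)
    (hy : y ∈ Submodule.span F (insert x (Set.range (transversal T r))))
    (hyj : y ∉ Submodule.span F (insert x (transversal T r '' {j}ᶜ)))
    (hy' : y ∈ Submodule.span F (insert x (Set.range (transversal T r')))) : r j = r' j := by
  by_contra hne
  have hrange (s : ι → κ) : insert x (Set.range (transversal T s)) =
      insert (T (j, s j)) (insert x (transversal T s '' {j}ᶜ)) := by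
    rw [Set.insert_comm, ← Set.image_univ, ← Set.union_compl_self {j}, Set.image_union,
      Set.image_singleton, Set.singleton_union]
    rfl
  have hagree : transversal T r '' {j}ᶜ = transversal T r' '' {j}ᶜ :=
    Set.image_congr fun i hi => by rw [transversal, transversal, hrr' i hi]
  have hexchange : T (j, r j) ∈ Submodule.span F (insert y (insert x (transversal T r '' {j}ᶜ))) :=
    mem_span_insert_exchange (hrange r ▸ hy) hyj
  refine h.apply_notMem_span hn (J := Set.univ) (r := r') (fun _ => Ne.symm hne) ?_
  rw [Set.image_univ]
  refine Submodule.span_le.2 (Set.insert_subset hy' ?_) hexchange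
  rw [hagree, hrange r']
  exact (Set.subset_insert _ _).trans Submodule.subset_span

open Classical in
lemma IsArcExtension.card_mul_card_transversals_le [Fintype κ] (h : IsArcExtension F n T x)
    (hn : Fintype.card ι + 1 < n) (hxy : y ∉ Submodule.span F {x}) :
    Fintype.card κ *
        #{r : ι → κ | y ∈ Submodule.span F (insert x (Set.range (transversal T r)))} ≤
      Fintype.card ι * Fintype.card κ ^ Fintype.card ι := by
  let bad (j : ι) : Finset (ι → κ) :=
    {r | y ∈ Submodule.span F (insert x (Set.range (transversal T r))) ∧
      y ∉ Submodule.span F (insert x (transversal T r '' {j}ᶜ))}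
  have hcover : ({r | y ∈ Submodule.span F (insert x (Set.range (transversal T r)))} :
      Finset (ι → κ)) ⊆ univ.biUnion bad := by
    intro r hr
    obtain ⟨j, hj⟩ := exists_notMem_span_insert_image_compl
      (fun j => h.apply_notMem_span hn (fun hj => (hj rfl).elim)) hxy (mem_filter.1 hr).2
    exact mem_biUnion.2 ⟨j, mem_univ j, mem_filter.2 ⟨mem_univ r, mem_filter.1 hr |>.2, hj⟩⟩
  have hbad (j : ι) : Fintype.card κ * #(bad j) ≤ Fintype.card κ ^ Fintype.card ι := by
    rw [← Fintype.card_fun, ← card_univ, ← card_univ, ← card_product]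
    refine card_le_card_of_injOn (fun z => Function.update z.2 j z.1) (fun _ _ => mem_univ _) ?_
    rintro ⟨b, r⟩ hr ⟨b', r'⟩ hr' heq
    simp only [bad, coe_product, Set.mem_prod, mem_coe, mem_filter, mem_univ, true_and] at hr hr'
    have hb : b = b' := by simpa using congrFun heq j
    have hoff (i : ι) (hi : i ≠ j) : r i = r' i := by simpa [hi] using congrFun heq i
    have hon : r j = r' j := h.apply_eq_of_mem_span hn hoff hr.1 hr.2 hr'.1
    refine Prod.ext hb (funext fun i => ?_)
    obtain rfl | hi := eq_or_ne i j
    exacts [hon, hoff i hi]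
  calc _ ≤ Fintype.card κ * ∑ j, #(bad j) := by
        gcongr
        exact (card_le_card hcover).trans card_biUnion_le
    _ = ∑ j, Fintype.card κ * #(bad j) := mul_sum _ _ _
    _ ≤ ∑ _j : ι, Fintype.card κ ^ Fintype.card ι := sum_le_sum fun j _ => hbad j
    _ = _ := by simp

end Arc

section ConflictDensity

variable {F ι κ W : Type*} [Field F] [AddCommGroup W] [Module F W] [Fintype ι] {T : ι × κ ↪ W}
  {S : Finset W} {n : ℕ}

open Classical in
lemma card_mul_sum_offDiag_card_transversals_le [Fintype κ] (hn : Fintype.card ι + 1 < n)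
    (hS : ∀ x ∈ S, IsArcExtension F n T x)
    (hS2 : (S : Set W).Pairwise fun x y => y ∉ Submodule.span F {x}) :
    Fintype.card κ * ∑ z ∈ S.offDiag,
        #{r : ι → κ | z.2 ∈ Submodule.span F (insert z.1 (Set.range (transversal T r)))} ≤
      Fintype.card ι * Fintype.card κ ^ Fintype.card ι *
        #{z ∈ S.offDiag | Conflict F T z.1 z.2} := by
  rw [mul_sum, mul_comm _ #_, ← smul_eq_mul #_, ← sum_const, sum_filter]
  refine sum_le_sum fun z hz => ?_
  obtain ⟨hx, hy, hxy⟩ := mem_offDiag.1 hz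
  split_ifs with hc
  · exact (hS _ hx).card_mul_card_transversals_le hn (hS2 hx hy hxy)
  · simp_all [Conflict]

variable [Fintype F]

-- Projecting from a transversal maps `S` to a projective line, which has only `q + 1` points.
open Classical in
lemma sq_card_le_card_add_one_mul_card_filter_mem_span (hW : finrank F W = Fintype.card ι + 2)
    (hn : Fintype.card ι < n) (hS : ∀ x ∈ S, IsArcExtension F n T x) (r : ι → κ) :
    #S ^ 2 ≤ (Fintype.card F + 1) *
      #{z ∈ S ×ˢ S | z.2 ∈ Submodule.span F (insert z.1 (Set.range (transversal T r)))} := by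
  obtain rfl | ⟨x, hx⟩ := S.eq_empty_or_nonempty
  · simp
  set U := Submodule.span F (Set.range (transversal T r)) with hU
  have : FiniteDimensional F W := .of_finrank_pos (by lia)
  have : Finite (W ⧸ U) := Module.finite_of_finite F
  have hquot : finrank F (W ⧸ U) = 2 := by
    have hrank := U.finrank_quotient_add_finrank
    rw [(hS x hx).finrank_span hn.le] at hrank
    lia
  have hline : Nat.card (ℙ F (W ⧸ U)) = Fintype.card F + 1 := by
    rw [card_of_finrank_two F _ hquot, Nat.card_eq_fintype_card]
  simp_rw [Submodule.span_insert, ← hU, ← hline]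
  exact sq_card_le_card_projectivization_mul U fun x hx => (hS x hx).notMem_span hn

variable [Fintype κ] [Nonempty κ]

open Classical in
lemma card_mul_sq_card_le (hW : finrank F W = Fintype.card ι + 2)
    (hn : Fintype.card ι + 1 < n) (hS : ∀ x ∈ S, IsArcExtension F n T x)
    (hS2 : (S : Set W).Pairwise fun x y => y ∉ Submodule.span F {x}) :
    Fintype.card κ * #S ^ 2 ≤ (Fintype.card F + 1) *
      (Fintype.card κ * #S + Fintype.card ι * #{z ∈ S.offDiag | Conflict F T z.1 z.2}) := by
  set K := Fintype.card κ ^ Fintype.card ι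
  let caught (z : W × W) : Finset (ι → κ) :=
    {r | z.2 ∈ Submodule.span F (insert z.1 (Set.range (transversal T r)))}
  have hdiag : ∑ z ∈ S.diag, #(caught z) = #S * K := by
    have hall (x : W) : caught (x, x) = univ :=
      filter_true_of_mem fun _ _ => Submodule.subset_span (Set.mem_insert _ _)
    simp [sum_diag, hall, K]
  have hoff := card_mul_sum_offDiag_card_transversals_le hn hS hS2
  have hcount : K * #S ^ 2 ≤
      (Fintype.card F + 1) * (#S * K + ∑ z ∈ S.offDiag, #(caught z)) := by
    have hswap := sum_card_bipartiteAbove_eq_sum_card_bipartiteBelow (s := S ×ˢ S)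
      (t := (univ : Finset (ι → κ))) fun z r =>
        z.2 ∈ Submodule.span F (insert z.1 (Set.range (transversal T r)))
    rw [← hdiag, ← sum_union (disjoint_diag_offDiag S), diag_union_offDiag]
    calc K * #S ^ 2 = ∑ _r : ι → κ, #S ^ 2 := by simp [K]
      _ ≤ _ := sum_le_sum fun r _ =>
        sq_card_le_card_add_one_mul_card_filter_mem_span hW (by lia) hS r
      _ = _ := by rw [← mul_sum]; exact congrArg _ hswap.symm
  have hK : 0 < K := by positivity
  refine Nat.le_of_mul_le_mul_left ?_ hK
  calc K * (Fintype.card κ * #S ^ 2) = Fintype.card κ * (K * #S ^ 2) := by ring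
    _ ≤ Fintype.card κ * ((Fintype.card F + 1) *
        (#S * K + ∑ z ∈ S.offDiag, #(caught z))) := by gcongr
    _ = (Fintype.card F + 1) * (Fintype.card κ * (#S * K) +
        Fintype.card κ * ∑ z ∈ S.offDiag, #(caught z)) := by ring
    _ ≤ (Fintype.card F + 1) * (Fintype.card κ * (#S * K) +
        Fintype.card ι * K * #{z ∈ S.offDiag | Conflict F T z.1 z.2}) := by gcongr
    _ = _ := by ring

open Classical in
lemma mul_sq_card_le_card_filter_conflict (hW : finrank F W = Fintype.card ι + 2)
    (hn : Fintype.card ι + 1 < n) (hS : ∀ x ∈ S, IsArcExtension F n T x)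
    (hS2 : (S : Set W).Pairwise fun x y => y ∉ Submodule.span F {x}) {D : ℕ} {β : ℝ}
    (hD : D ≤ Fintype.card F + 1)
    (hβ : β * (2 * Fintype.card ι * (Fintype.card F + 1) ^ 2) ≤ Fintype.card κ * D)
    (hcard : Fintype.card F + 1 + D < #S) :
    β * #S ^ 2 ≤ #{z ∈ S.offDiag | Conflict F T z.1 z.2} := by
  have hcount := card_mul_sq_card_le hW hn hS hS2
  have hκ : (0 : ℝ) < Fintype.card κ := by positivity
  have hN : (0 : ℝ) < #S := mod_cast (Nat.zero_le _).trans_lt hcard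
  rify at hcount hD hcard
  set Q : ℝ := Fintype.card F + 1
  by_contra! hE
  have hsparse : 2 * Q ^ 2 * (Fintype.card ι * #{z ∈ S.offDiag | Conflict F T z.1 z.2}) ≤
      Fintype.card κ * D * #S ^ 2 := by
    calc _ ≤ 2 * Q ^ 2 * (Fintype.card ι * (β * #S ^ 2)) := by gcongr
      _ = β * (2 * Fintype.card ι * Q ^ 2) * #S ^ 2 := by ring
      _ ≤ _ := by gcongr
  have hupper : #S * (2 * Q - D) ≤ 2 * Q ^ 2 := by
    refine le_of_mul_le_mul_left ?_ (mul_pos hκ hN)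
    linear_combination 2 * Q * hcount + hsparse
  have hgap : 0 < 2 * Q - D := by linarith [show 0 < Q by positivity]
  have hlower : 2 * Q ^ 2 ≤ (Q + D) * (2 * Q - D) := by
    linear_combination mul_nonneg D.cast_nonneg (sub_nonneg.2 hD)
  exact (hlower.trans_lt (mul_lt_mul_of_pos_right hcard hgap)).not_ge hupper

end ConflictDensity

section CountingArcs

variable {F ι κ W : Type*} [Field F] [AddCommGroup W] [Module F W] [Fintype ι] [Fintype κ] {n : ℕ}

open Classical in
lemma IsArc.sdiff_map_mem_indepSets {T : ι × κ ↪ W} {G P : Finset W} (h : IsArc F n (P : Set W))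
    (hn : Fintype.card ι + 1 < n) (hP : P ⊆ G) (hT : univ.map T ⊆ P) :
    P \ univ.map T ∈ indepSets (Conflict F T) {x ∈ G | IsArcExtension F n T x} := by
  have hTP : Set.range T ⊆ P := by simpa using coe_subset.2 hT
  rw [mem_indepSets]
  refine ⟨fun x hx => ?_, fun x hx y hy hxy => ?_⟩
  · obtain ⟨hx, hxT⟩ := mem_sdiff.1 hx
    exact mem_filter.2 ⟨hP hx, by simpa using hxT, h.subset (Set.insert_subset hx hTP)⟩
  · obtain ⟨hy, hyT⟩ := mem_sdiff.1 hy
    exact h.not_conflict hn hTP (mem_sdiff.1 hx).1 hy (by simpa using hyT) hxy.symm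

variable [Fintype F] [Nonempty κ] {G : Finset W} {D t : ℕ} {β : ℝ}

open Classical in
lemma card_indepSets_conflict_le (hW : finrank F W = Fintype.card ι + 2)
    (hn : Fintype.card ι + 1 < n) (hG : (G : Set W).Pairwise fun x y => y ∉ Submodule.span F {x})
    (hD : D ≤ Fintype.card F + 1)
    (hβ : β * (2 * Fintype.card ι * (Fintype.card F + 1) ^ 2) ≤ Fintype.card κ * D)
    (ht : #G * Real.exp (-(β * t)) ≤ Fintype.card F + 1 + D) (T : ι × κ ↪ W) :
    #(indepSets (Conflict F T) {x ∈ G | IsArcExtension F n T x}) ≤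
      2 ^ (Fintype.card F + 1 + D) * (#G + 1) ^ t := by
  have hV : #{x ∈ G | IsArcExtension F n T x} ≤ #G := card_filter_le _ _
  refine (card_indepSets_le (β := β) (fun S hS hcard => ?_) ?_).trans
    (Nat.mul_le_mul_left _ (Nat.pow_le_pow_left (Nat.add_le_add_right hV 1) t))
  · exact mul_sq_card_le_card_filter_conflict hW hn (fun x hx => (mem_filter.1 (hS hx)).2)
      (hG.mono (coe_subset.2 (hS.trans (filter_subset _ _)))) hD hβ hcard
  · push_cast
    exact ht.trans' (by gcongr)

open Classical in
lemma card_filter_isArc_le (hW : finrank F W = Fintype.card ι + 2)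
    (hn : Fintype.card ι + 1 < n) (hG : (G : Set W).Pairwise fun x y => y ∉ Submodule.span F {x})
    (hD : D ≤ Fintype.card F + 1)
    (hβ : β * (2 * Fintype.card ι * (Fintype.card F + 1) ^ 2) ≤ Fintype.card κ * D)
    (ht : #G * Real.exp (-(β * t)) ≤ Fintype.card F + 1 + D) :
    #{P ∈ G.powerset | Fintype.card ι * Fintype.card κ ≤ #P ∧ IsArc F n (P : Set W)} ≤
      #G ^ (Fintype.card ι * Fintype.card κ) *
        (2 ^ (Fintype.card F + 1 + D) * (#G + 1) ^ t) := by
  let array (T : ι × κ ↪ G) : ι × κ ↪ W := T.trans (.subtype _)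
  let containing (T : ι × κ ↪ G) : Finset (Finset W) :=
    (indepSets (Conflict F (array T)) {x ∈ G | IsArcExtension F n (array T) x}).image
      (· ∪ univ.map (array T))
  have hcover : {P ∈ G.powerset | Fintype.card ι * Fintype.card κ ≤ #P ∧ IsArc F n (P : Set W)} ⊆
      univ.biUnion containing := by
    intro P hP
    obtain ⟨hPG, hcard, harc⟩ := by simpa only [mem_filter, mem_powerset] using hP
    obtain ⟨T₀⟩ : Nonempty (ι × κ ↪ P) := Function.Embedding.nonempty_of_card_le (by simpa)
    let T : ι × κ ↪ G := T₀.trans ⟨Set.inclusion hPG, Set.inclusion_injective hPG⟩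
    have hT : univ.map (array T) ⊆ P := by
      intro x hx
      obtain ⟨i, -, rfl⟩ := mem_map.1 hx
      exact (T₀ i).2
    exact mem_biUnion.2 ⟨T, mem_univ T, mem_image.2
      ⟨_, harc.sdiff_map_mem_indepSets hn hPG hT, sdiff_union_of_subset hT⟩⟩
  have harrays : Fintype.card (ι × κ ↪ G) ≤ #G ^ (Fintype.card ι * Fintype.card κ) := by
    simpa using Nat.descFactorial_le_pow #G (Fintype.card ι * Fintype.card κ)
  calc _ ≤ #(univ.biUnion containing) := card_le_card hcover
    _ ≤ Fintype.card (ι × κ ↪ G) * (2 ^ (Fintype.card F + 1 + D) * (#G + 1) ^ t) :=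
      card_biUnion_le_card_mul _ _ _ fun T _ =>
        card_image_le.trans (card_indepSets_conflict_le hW hn hG hD hβ ht _)
    _ ≤ _ := Nat.mul_le_mul_right _ harrays

end CountingArcs

section GeneralPosition

variable {F V : Type*} [Field F] [AddCommGroup V] [Module F V]

/-- The embedding of an affine space as the hyperplane at height `1`, which turns affine
independence into linear independence. -/
def homogenize (F V : Type*) [One F] : V ↪ F × V :=
  ⟨Prod.mk 1, Prod.mk_right_injective 1⟩

lemma linearIndependent_homogenize_comp {ι : Type*} {p : ι → V} (h : AffineIndependent F p) :
    LinearIndependent F (homogenize F V ∘ p) := by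
  rw [affineIndependent_iff] at h
  refine linearIndependent_iff'.2 fun s g hg => h s g ?_ ?_
  · simpa [homogenize, Prod.fst_sum] using congrArg Prod.fst hg
  · simpa [homogenize, Prod.snd_sum] using congrArg Prod.snd hg

lemma homogenize_notMem_span_singleton {x y : V} (h : x ≠ y) :
    homogenize F V y ∉ Submodule.span F {homogenize F V x} := by
  intro hy
  obtain ⟨a, ha⟩ := Submodule.mem_span_singleton.1 hy
  obtain ⟨rfl, rfl⟩ : a = 1 ∧ a • x = y := by simpa [homogenize] using ha
  exact h (one_smul F x).symm

variable {d : ℕ}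

lemma IsGenPos.isArc_map_homogenize {P : Finset (Fin d → F)} (h : IsGenPos F d P)
    (hcard : d + 1 ≤ #P) :
    IsArc F (d + 1) (P.map (homogenize F (Fin d → F)) : Set (F × (Fin d → F))) := by
  intro A hA hn
  obtain ⟨B, hB, rfl⟩ := Set.subset_image_iff.1 (coe_map _ P ▸ hA)
  lift B to Finset (Fin d → F) using P.finite_toSet.subset hB
  rw [(homogenize F _).injective.encard_image, Set.encard_coe_eq_coe_finsetCard] at hn
  obtain ⟨C, hBC, hCP, hC⟩ := exists_subsuperset_card_eq (coe_subset.1 hB) (mod_cast hn) hcard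
  exact (LinearIndepOn.mono (linearIndependent_homogenize_comp (h C (coe_subset.2 hCP) hC))
    (coe_subset.2 hBC)).id_image

variable [Fintype F] {k s D t : ℕ} {β : ℝ}

open Classical in
lemma card_filter_le_card_and_isGenPos_le (hs : s ≠ 0) (hD : D ≤ Fintype.card F + 1)
    (hβ : β * (2 * k * (Fintype.card F + 1) ^ 2) ≤ s * D)
    (ht : (Fintype.card F : ℝ) ^ (k + 1) * Real.exp (-(β * t)) ≤ Fintype.card F + 1 + D) :
    #{P : Finset (Fin (k + 1) → F) |
        k * s + (k + 1) < #P ∧ IsGenPos F (k + 1) (P : Set (Fin (k + 1) → F))} ≤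
      (Fintype.card F ^ (k + 1)) ^ (k * s) *
        (2 ^ (Fintype.card F + 1 + D) * (Fintype.card F ^ (k + 1) + 1) ^ t) := by
  have : NeZero s := ⟨hs⟩
  set G : Finset (F × (Fin (k + 1) → F)) := univ.map (homogenize F _)
  have hcardG : #G = Fintype.card F ^ (k + 1) := by simp [G]
  have hG : (G : Set (F × (Fin (k + 1) → F))).Pairwise fun x y => y ∉ Submodule.span F {x} := by
    rw [coe_map]
    exact (homogenize F _).injective.injOn.pairwise_image.2
      fun x _ y _ hxy => homogenize_notMem_span_singleton hxy
  have harcs := card_filter_isArc_le (ι := Fin k) (κ := Fin s) (n := k + 2) (D := D) (t := t)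
    (β := β) (by simp; lia) (by simp) hG hD (by simpa using hβ) (by simpa [hcardG] using ht)
  simp only [hcardG, Fintype.card_fin] at harcs
  refine harcs.trans' (card_le_card_of_injOn (map (homogenize F _)) (fun P hP => ?_)
    (map_injective _).injOn)
  obtain ⟨hcard, hP⟩ := (mem_filter.1 hP).2
  refine mem_filter.2 ⟨mem_powerset.2 (map_subset_map.2 (subset_univ P)), ?_,
    IsGenPos.isArc_map_homogenize hP (by lia)⟩
  rw [card_map]
  lia

open Classical in
lemma card_filter_isGenPos_le (hs : s ≠ 0) (hD : D ≤ Fintype.card F + 1)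
    (hβ : β * (2 * k * (Fintype.card F + 1) ^ 2) ≤ s * D)
    (ht : (Fintype.card F : ℝ) ^ (k + 1) * Real.exp (-(β * t)) ≤ Fintype.card F + 1 + D) :
    #{P : Finset (Fin (k + 1) → F) | IsGenPos F (k + 1) (P : Set (Fin (k + 1) → F))} ≤
      2 ^ (Fintype.card F + 2 + D) * (Fintype.card F ^ (k + 1) + 1) ^ (k * s + (k + 1) + t) := by
  set q := Fintype.card F
  set N := q ^ (k + 1)
  have hsmall : #{P : Finset (Fin (k + 1) → F) | #P ≤ k * s + (k + 1)} ≤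
      (N + 1) ^ (k * s + (k + 1)) := by
    simpa [q, N] using card_filter_card_le_le_pow (α := Fin (k + 1) → F) (k * s + (k + 1))
  have hlarge := card_filter_le_card_and_isGenPos_le hs hD hβ ht
  calc _ ≤ #{P : Finset (Fin (k + 1) → F) | #P ≤ k * s + (k + 1) ∨
        k * s + (k + 1) < #P ∧ IsGenPos F (k + 1) (P : Set (Fin (k + 1) → F))} :=
        card_le_card (monotone_filter_right _ fun P _ hP => by grind)
    _ ≤ (N + 1) ^ (k * s + (k + 1)) + N ^ (k * s) * (2 ^ (q + 1 + D) * (N + 1) ^ t) := by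
      rw [filter_or]
      exact (card_union_le _ _).trans (add_le_add hsmall hlarge)
    _ ≤ (2 ^ (q + 1 + D) * (N + 1) ^ t) * (N + 1) ^ (k * s + (k + 1)) +
        (N + 1) ^ (k * s + (k + 1)) * (2 ^ (q + 1 + D) * (N + 1) ^ t) := by
      gcongr
      · exact Nat.le_mul_of_pos_left _ (by positivity)
      · lia
      · exact N.le_succ
      · lia
    _ = _ := by ring

end GeneralPosition

section Parameters

lemma inv_mul_sq_le_sq {q X : ℝ} (hq : 1 ≤ q) (hX : 0 < X) (hqX : X ^ 3 = q ^ 2) (k : ℕ) :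
    (8 * (k + 1) * X)⁻¹ * (2 * k * (q + 1) ^ 2) ≤ X ^ 2 := by
  rw [inv_mul_le_iff₀ (by positivity)]
  calc 2 * k * (q + 1) ^ 2 ≤ 2 * (k + 1) * (2 * q) ^ 2 := by gcongr <;> linarith
    _ = 8 * (k + 1) * X * X ^ 2 := by linear_combination -8 * (k + 1) * hqX

lemma pow_mul_exp_neg_inv_mul_ceil_le_one {q : ℝ} (hq : 1 ≤ q) (d : ℕ) {c : ℝ} (hc : 0 < c) :
    q ^ d * Real.exp (-(c⁻¹ * ⌈c * (d * Real.logb 2 q)⌉₊)) ≤ 1 := by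
  have hlog : Real.log q ≤ Real.logb 2 q :=
    le_div_self (Real.log_nonneg hq) (Real.log_pos one_lt_two) (by linarith [Real.log_two_lt_d9])
  have hexp : d * Real.log q ≤ c⁻¹ * ⌈c * (d * Real.logb 2 q)⌉₊ := by
    rw [le_inv_mul_iff₀ hc]
    exact (Nat.le_ceil _).trans' (by gcongr)
  calc q ^ d * Real.exp (-(c⁻¹ * ⌈c * (d * Real.logb 2 q)⌉₊))
      ≤ q ^ d * Real.exp (-(d * Real.log q)) := by gcongr
    _ = 1 := by
      rw [Real.exp_neg, mul_comm (d : ℝ), Real.exp_mul, Real.exp_log (by linarith),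
        Real.rpow_natCast, mul_inv_cancel₀ (by positivity)]

lemma pow_add_one_le_two_rpow {q : ℝ} (hq : 2 ≤ q) (d : ℕ) :
    q ^ d + 1 ≤ 2 ^ ((d + 1) * Real.logb 2 q) := by
  calc q ^ d + 1 ≤ q ^ d * q := by nlinarith [one_le_pow₀ (n := d) (by linarith : 1 ≤ q)]
    _ = 2 ^ ((d + 1) * Real.logb 2 q) := by
      rw [mul_comm _ (Real.logb _ _), Real.rpow_mul zero_le_two, Real.rpow_logb two_pos (by simp)
        (by linarith), ← pow_succ]
      exact_mod_cast (Real.rpow_natCast q (d + 1)).symm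

lemma add_ceil_mul_le {X L : ℝ} (hX : 1 ≤ X) (hL : 1 ≤ L) (k : ℕ) :
    2 + ⌈X⌉₊ + (k * ⌈X⌉₊ + (k + 1) + ⌈8 * (k + 1) * X * ((k + 1) * L)⌉₊) * ((k + 2) * L) ≤
      26 * (k + 1) ^ 3 * X * L ^ 2 := by
  set d : ℝ := k + 1
  have hd : 1 ≤ d := by simp [d]
  have hs : (⌈X⌉₊ : ℝ) ≤ X + 1 := (Nat.ceil_lt_add_one (by positivity)).le
  have ht : (⌈8 * d * X * (d * L)⌉₊ : ℝ) ≤ 8 * d * X * (d * L) + 1 :=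
    (Nat.ceil_lt_add_one (by positivity)).le
  have hXL : X ≤ d ^ 3 * X * L ^ 2 := by
    calc X = 1 ^ 3 * X * 1 ^ 2 := by ring
      _ ≤ _ := by gcongr
  have hsum : k * ⌈X⌉₊ + d + ⌈8 * d * X * (d * L)⌉₊ ≤ 11 * d ^ 2 * X * L := by
    calc k * ⌈X⌉₊ + d + ⌈8 * d * X * (d * L)⌉₊
        ≤ k * (X + 1) + d + (8 * d * X * (d * L) + 1) := by gcongr
      _ ≤ 3 * (1 * d * X * 1) + 8 * d ^ 2 * X * L := by
        linear_combination 2 * mul_nonneg (by linarith : 0 ≤ d) (sub_nonneg.2 hX) + hX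
      _ ≤ 3 * (d * d * X * L) + 8 * d ^ 2 * X * L := by gcongr
      _ = _ := by ring
  calc _ ≤ 2 + (X + 1) + 11 * d ^ 2 * X * L * (2 * d * L) := by
        gcongr
        linarith
    _ ≤ _ := by linear_combination 3 * hX + 4 * hXL

end Parameters

-- Taking `s = D = ⌈X⌉₊` forces `β` to be of order `1 / X`, and the exponents `D`, `k * s` and `t`
-- are then of the same order up to logarithms.
open Classical in
lemma card_filter_isGenPos_le_of_cube_eq_sq {F : Type*} [Field F] [Fintype F] {X : ℝ} (hX : 0 < X)
    (hqX : X ^ 3 = Fintype.card F ^ 2) (hXq : X ≤ Fintype.card F) (k : ℕ) :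
    #{P : Finset (Fin (k + 1) → F) | IsGenPos F (k + 1) (P : Set (Fin (k + 1) → F))} ≤
      2 ^ (Fintype.card F + 2 + ⌈X⌉₊) * (Fintype.card F ^ (k + 1) + 1) ^
        (k * ⌈X⌉₊ + (k + 1) +
          ⌈8 * (k + 1) * X * ((k + 1) * Real.logb 2 (Fintype.card F))⌉₊) := by
  have hq : (1 : ℝ) ≤ Fintype.card F := mod_cast Fintype.card_pos
  have hs : X ≤ ⌈X⌉₊ := Nat.le_ceil X
  refine card_filter_isGenPos_le (β := (8 * (k + 1) * X)⁻¹) (by positivity) ?_ ?_ ?_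
  · exact (Nat.ceil_le.2 hXq).trans (Nat.le_succ _)
  · refine (inv_mul_sq_le_sq hq hX hqX k).trans ?_
    rw [sq]
    gcongr
  · calc _ ≤ (1 : ℝ) := mod_cast
          pow_mul_exp_neg_inv_mul_ceil_le_one hq (k + 1) (c := 8 * (k + 1) * X) (by positivity)
      _ ≤ _ := by linarith

theorem counting_general_position_sets_general (F : Type*) [Field F] [Fintype F] (d : ℕ) :
    ({P : Finset (Fin d → F) | IsGenPos F d ↑P}.ncard : ℝ) ≤
      2 ^ (Fintype.card F +
        26 * d ^ 3 * (Fintype.card F : ℝ) ^ (2 / 3 : ℝ) * Real.logb 2 (Fintype.card F) ^ 2) := by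
  classical
  set q := Fintype.card F
  set X : ℝ := (q : ℝ) ^ (2 / 3 : ℝ) with hX
  set L := Real.logb 2 q
  have hq : (2 : ℝ) ≤ q := mod_cast Fintype.one_lt_card (α := F)
  rw [Set.ncard_eq_toFinset_card', Set.toFinset_ofPred]
  obtain _ | k := d
  · calc _ ≤ _ := Nat.cast_le.2 (card_le_univ _)
      _ = (2 : ℝ) ^ (1 : ℝ) := by simp
      _ ≤ _ := Real.rpow_le_rpow_of_exponent_le one_le_two (by simpa using one_le_two.trans hq)
  have hX1 : 1 ≤ X := Real.one_le_rpow (by linarith) (by norm_num)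
  have hXq : X ≤ q := Real.rpow_le_self_of_one_le (by linarith) (by norm_num)
  have hqX : X ^ 3 = (q : ℝ) ^ 2 := by
    rw [hX, ← Real.rpow_mul_natCast (by positivity)]
    norm_num
  have hL1 : 1 ≤ L := by rwa [Real.le_logb_iff_rpow_le one_lt_two (by linarith), Real.rpow_one]
  have hbase : (q : ℝ) ^ (k + 1) + 1 ≤ 2 ^ ((k + 2) * L) := by
    simpa [add_assoc, one_add_one_eq_two] using pow_add_one_le_two_rpow hq (k + 1)
  set s := ⌈X⌉₊
  set t := ⌈8 * (k + 1) * X * ((k + 1) * L)⌉₊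
  calc _ ≤ ((2 ^ (q + 2 + s) * (q ^ (k + 1) + 1) ^ (k * s + (k + 1) + t) : ℕ) : ℝ) :=
        Nat.cast_le.2 (card_filter_isGenPos_le_of_cube_eq_sq (by linarith) hqX hXq k)
    _ ≤ 2 ^ (q + 2 + s) * (2 ^ ((k + 2) * L)) ^ (k * s + (k + 1) + t) := by
      push_cast
      gcongr
    _ = 2 ^ (q + (2 + s + (k * s + (k + 1) + t) * ((k + 2) * L))) := by
      rw [← Real.rpow_natCast, ← Real.rpow_mul_natCast zero_le_two, ← Real.rpow_add two_pos]
      push_cast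
      ring_nf
    _ ≤ _ := by
      gcongr
      · exact one_le_two
      · push_cast
        exact add_ceil_mul_le hX1 hL1 k

lemma eventually_const_mul_rpow_mul_logb_sq_le (C : ℝ) {a b : ℝ} (hab : a < b) :
    ∀ᶠ x : ℝ in Filter.atTop, C * x ^ a * Real.logb 2 x ^ 2 ≤ x ^ b := by
  have hlog : (fun x : ℝ => Real.log x ^ 2) =o[Filter.atTop] fun x => x ^ (b - a) := by
    simpa using isLittleO_log_rpow_rpow_atTop (2 : ℝ) (sub_pos.2 hab)
  have hC := (hlog.const_mul_left (C / Real.log 2 ^ 2)).bound one_pos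
  filter_upwards [hC, Filter.eventually_gt_atTop 0] with x hx hx0
  rw [one_mul, Real.norm_of_nonneg (by positivity : 0 ≤ x ^ (b - a))] at hx
  calc C * x ^ a * Real.logb 2 x ^ 2 = x ^ a * (C / Real.log 2 ^ 2 * Real.log x ^ 2) := by
        rw [Real.logb]; ring
    _ ≤ x ^ a * x ^ (b - a) := by gcongr; exact (Real.le_norm_self _).trans hx
    _ = x ^ b := by rw [← Real.rpow_add hx0, add_sub_cancel]

/-- The number of general position sets in `𝔽_q^d` is at most
`2^{q + q^{2d/(2d+1) + ε}}`. -/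
theorem counting_general_position_sets (d : ℕ) (hd : 2 ≤ d) (ε : ℝ) (hε : 0 < ε) :
    ∃ Q : ℕ, ∀ q : ℕ, Q ≤ q → IsPrimePow q →
      ∀ (F : Type) [Field F] [Fintype F], Fintype.card F = q →
        (({P : Finset (Fin d → F) | IsGenPos F d ↑P}).ncard : ℝ) ≤
          (2 : ℝ) ^ ((q : ℝ) + (q : ℝ) ^ ((2 * (d : ℝ)) / (2 * (d : ℝ) + 1) + ε)) := by
  have hexponent : (2 / 3 : ℝ) < 2 * d / (2 * d + 1) + ε := by
    have : (2 / 3 : ℝ) ≤ 2 * d / (2 * d + 1) := by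
      rw [div_le_div_iff₀ (by norm_num) (by positivity)]
      linarith [show (2 : ℝ) ≤ d from mod_cast hd]
    linarith
  obtain ⟨Q, hQ⟩ := Filter.eventually_atTop.1 <| tendsto_natCast_atTop_atTop.eventually <|
    eventually_const_mul_rpow_mul_logb_sq_le (26 * d ^ 3) hexponent
  refine ⟨Q, fun q hq _ F _ _ hF => ?_⟩
  subst hF
  exact (counting_general_position_sets_general F d).trans <|
    Real.rpow_le_rpow_of_exponent_le one_le_two (add_le_add_right (hQ _ hq) _)
end

section
/- For every integer d ≥ 2 there exists a constant c > 0 such that for every prime power q and every point set P ⊆ 𝔽_q^d with |P| ≥ 4d·q^{d−1}, the (d+1)-uniform hypergraph H on vertex set P whose edges are the critical coplanar (d+1)-element subsets of P is (c, τ)-bounded, where k = |P|/q and τ = max{k^{−1}·q^{1/d − 1}, k^{−2}·q^{d−2}}. -/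
/-- A `(d+1)`-element subset of `𝔽_q^d` is critical coplanar if it is affinely dependent
(coplanar) while every proper subset of it is affinely independent. -/
def IsCriticalCoplanar (F : Type*) [Field F] (d : ℕ) (t : Finset (Fin d → F)) : Prop :=
  t.card = d + 1 ∧ ¬ AffineIndependent F ((↑) : t → (Fin d → F)) ∧
    ∀ s : Finset (Fin d → F), s ⊂ t → AffineIndependent F ((↑) : s → (Fin d → F))

/-- The edge set of the `(d+1)`-uniform hypergraph on vertex set `P ⊆ 𝔽_q^d` whose edges
are the critical coplanar `(d+1)`-element subsets of `P`. -/
def criticalEdges (F : Type*) [Field F] (d : ℕ) (P : Finset (Fin d → F)) :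
    Set (Finset (Fin d → F)) :=
  {t | t ⊆ P ∧ IsCriticalCoplanar F d t}

/-!
Both bounds come from counting point by point, using that a flat spanned by `m + 1` points has at
most `q ^ m` elements.

*Many edges.* Consider the pairs of a nonzero linear functional `a` and an affine circuit of `d + 1`
points of `P` on which `a` is constant. Fix `a`. Choosing points greedily inside a level set of
size `s` gives at least `(s - d * q ^ (d - 2)) ^ (d + 1)` tuples all of whose `d`-point subtuples
are independent, and such a tuple is dependent for free, as it lies in a hyperplane. The power mean
inequality over the `q` levels then gives at least `(|P| - d * q ^ (d - 1)) ^ (d + 1) / q ^ d`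
circuits for each `a`. Conversely a circuit spans a hyperplane, so exactly `q - 1` nonzero
functionals are constant on it. Hence `|P| ^ (d + 1) ≤ C * q * |H|`.

*Small degrees.* An edge containing `U` is determined by `d - |U|` further points and a last point,
which lies in the hyperplane spanned by the others; so `U` has degree at most
`|P| ^ (d - |U|) * q ^ (d - 1)` if `|U| ≤ d`. The two terms of `τ` amount to `q ≤ (|P| * τ) ^ d`,
which is what is needed for `|U| = d + 1`, and `q ^ d ≤ |P| ^ 2 * τ`, which covers all smaller `U`.
-/

open Finset Module

section AffineGeometry

variable {k V P ι : Type*} [DivisionRing k] [AddCommGroup V] [Module k V] [AddTorsor V P] {n : ℕ}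

theorem affineIndependent_fin_cons {p : Fin n → P} {x : P} (hp : AffineIndependent k p)
    (hx : x ∉ affineSpan k (Set.range p)) :
    AffineIndependent k (Fin.cons x p : Fin (n + 1) → P) := by
  refine AffineIndependent.affineIndependent_of_notMem_span (i := 0) ?_ ?_
  · rw [← affineIndependent_equiv (finSuccAboveEquiv (0 : Fin (n + 1)))]
    simpa [Function.comp_def, finSuccAboveEquiv_apply] using hp
  · have hrange : (Fin.cons x p : Fin (n + 1) → P) '' {i | i ≠ 0} = Set.range p := by
      rw [← Set.compl_singleton_eq, ← Fin.range_succ, ← Set.range_comp, Fin.cons_comp_succ]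
    rwa [Fin.cons_zero, hrange]

theorem affineIndependent_fin_cons_comp_succAbove {p : Fin (n + 1) → P} {x : P}
    (hp : AffineIndependent k p)
    (hx : ∀ i : Fin (n + 1), x ∉ affineSpan k (Set.range (p ∘ i.succAbove))) (i : Fin (n + 2)) :
    AffineIndependent k ((Fin.cons x p : Fin (n + 2) → P) ∘ i.succAbove) := by
  cases i using Fin.cases with
  | zero => simpa [Function.comp_def] using hp
  | succ i =>
    have hcons : (Fin.cons x p : Fin (n + 2) → P) ∘ i.succ.succAbove =
        Fin.cons x (p ∘ i.succAbove) := by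
      funext j
      cases j using Fin.cases <;> simp
    rw [hcons]
    exact affineIndependent_fin_cons (hp.comp_embedding i.succAboveEmb) (hx i)

theorem affineIndependent_coe_of_erase [DecidableEq P] {t : Finset P} {x : P} (hx : x ∈ t)
    (ht : AffineIndependent k ((↑) : t.erase x → P))
    (hspan : x ∉ affineSpan k (t.erase x : Set P)) : AffineIndependent k ((↑) : t → P) := by
  refine AffineIndependent.affineIndependent_of_notMem_span (i := ⟨x, hx⟩) ?_ ?_
  · let e : {y : t // y ≠ ⟨x, hx⟩} ↪ t.erase x :=
      ⟨fun y ↦ ⟨y, mem_erase.2 ⟨fun h ↦ y.2 (Subtype.ext h), y.1.2⟩⟩,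
        fun y z h ↦ Subtype.ext (Subtype.ext (Subtype.mk.inj h))⟩
    exact ht.comp_embedding e
  · have himage : ((↑) : t → P) '' {y | y ≠ ⟨x, hx⟩} = (t.erase x : Set P) := by
      ext y
      simp [Subtype.ext_iff, and_comm]
    rwa [himage]

theorem finite_affineSpan_range [Finite k] [Finite ι] (p : ι → P) :
    (affineSpan k (Set.range p) : Set P).Finite := by
  cases isEmpty_or_nonempty (affineSpan k (Set.range p))
  · exact Set.toFinite _
  · have : Finite (vectorSpan k (Set.range p)) := Module.finite_of_finite k
    rw [← direction_affineSpan] at this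
    have : Finite (affineSpan k (Set.range p)) :=
      Finite.of_equiv _ (Equiv.vaddConst (Classical.arbitrary _))
    exact Set.toFinite _

theorem natCard_affineSpan_range_le [Finite k] [Fintype ι] (p : ι → P)
    (hι : Fintype.card ι ≤ n + 1) : Nat.card (affineSpan k (Set.range p)) ≤ Nat.card k ^ n := by
  cases isEmpty_or_nonempty ι
  · simp [Set.range_eq_empty]
  · obtain ⟨m, hm⟩ := Nat.exists_eq_succ_of_ne_zero (Fintype.card_ne_zero (α := ι))
    have hfinrank := finrank_vectorSpan_range_le k p hm
    have : Nonempty (affineSpan k (Set.range p)) :=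
      ((Set.range_nonempty p).mono (subset_affineSpan k _)).to_subtype
    rw [← Nat.card_congr (Equiv.vaddConst this.some), direction_affineSpan,
      natCard_eq_pow_finrank (K := k)]
    exact Nat.pow_le_pow_right Nat.card_pos (by omega)

open scoped Classical in
theorem card_filter_mem_affineSpan_range_le [Finite k] [Fintype ι] (A : Finset P) (p : ι → P)
    (hι : Fintype.card ι ≤ n + 1) :
    #{x ∈ A | x ∈ affineSpan k (Set.range p)} ≤ Nat.card k ^ n := by
  refine le_trans ?_ (natCard_affineSpan_range_le (k := k) p hι)
  rw [← Set.ncard_coe_finset]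
  exact Set.ncard_le_ncard (fun x hx ↦ (mem_filter.1 hx).2) (finite_affineSpan_range p)

variable (k) in
/-- An affine circuit, in the matroid sense: a minimal affinely dependent tuple. As affine
independence passes to subfamilies, minimality is tested on omitting a single entry. -/
def IsAffineCircuit (p : Fin (n + 1) → P) : Prop :=
  ¬ AffineIndependent k p ∧ ∀ i : Fin (n + 1), AffineIndependent k (p ∘ i.succAbove)

theorem IsAffineCircuit.injective {p : Fin (n + 3) → P} (hp : IsAffineCircuit k p) :
    Function.Injective p := by
  intro i j hij
  obtain ⟨l, hil, hjl⟩ := Fin.exists_ne_and_ne_of_two_lt i j (by omega)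
  obtain ⟨i, rfl⟩ := Fin.exists_succAbove_eq hil.symm
  obtain ⟨j, rfl⟩ := Fin.exists_succAbove_eq hjl.symm
  exact congrArg l.succAbove ((hp.2 l).injective hij)

theorem IsAffineCircuit.finrank_vectorSpan {p : Fin (n + 2) → P} (hp : IsAffineCircuit k p) :
    finrank k (vectorSpan k (Set.range p)) = n := by
  refine le_antisymm ?_ ?_
  · exact (finrank_vectorSpan_le_iff_not_affineIndependent k p (Fintype.card_fin _)).2 hp.1
  · refine ((hp.2 0).finrank_vectorSpan (Fintype.card_fin _)).ge.trans ?_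
    exact Submodule.finrank_mono (vectorSpan_mono k (Set.range_comp_subset_range _ p))

end AffineGeometry

section LevelSets

variable {k V ι : Type*} [Field k] [AddCommGroup V] [Module k V] {n : ℕ}

theorem mem_dualAnnihilator_vectorSpan_range_iff {a : Dual k V} {p : ι → V} :
    a ∈ (vectorSpan k (Set.range p)).dualAnnihilator ↔ ∀ i j, a (p i) = a (p j) := by
  have hle : vectorSpan k (Set.range p) ≤ LinearMap.ker a ↔ ∀ i j, a (p i) = a (p j) := by
    rw [vectorSpan, Submodule.span_le, Set.vsub_subset_iff]
    simp [sub_eq_zero]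
  rw [← hle, Submodule.mem_dualAnnihilator]
  rfl

theorem not_affineIndependent_of_dual_const [FiniteDimensional k V] [Fintype ι] {a : Dual k V}
    (ha : a ≠ 0) {p : ι → V} (hι : Fintype.card ι = finrank k V + 1)
    (hp : ∀ i j, a (p i) = a (p j)) : ¬ AffineIndependent k p := by
  intro hind
  rw [← mem_dualAnnihilator_vectorSpan_range_iff,
    hind.vectorSpan_eq_top_of_card_eq_finrank_add_one hι, Submodule.dualAnnihilator_top] at hp
  exact ha hp

theorem IsAffineCircuit.natCard_dualAnnihilator {p : Fin (n + 2) → V}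
    (hV : finrank k V = n + 1) (hp : IsAffineCircuit k p) :
    Nat.card (vectorSpan k (Set.range p)).dualAnnihilator = Nat.card k := by
  have : FiniteDimensional k V := .of_finrank_eq_succ hV
  have hadd := Subspace.finrank_add_finrank_dualAnnihilator_eq (vectorSpan k (Set.range p))
  rw [hp.finrank_vectorSpan, hV] at hadd
  rw [natCard_eq_pow_finrank (K := k), Nat.add_left_cancel hadd, pow_one]

open scoped Classical in
theorem IsAffineCircuit.card_dual_ne_zero_const [Fintype (Dual k V)] {p : Fin (n + 2) → V}
    (hV : finrank k V = n + 1) (hp : IsAffineCircuit k p) :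
    #{a ∈ (univ : Finset (Dual k V)).erase 0 | ∀ i j, a (p i) = a (p j)} = Nat.card k - 1 := by
  have : FiniteDimensional k V := .of_finrank_eq_succ hV
  simp_rw [← mem_dualAnnihilator_vectorSpan_range_iff]
  rw [filter_erase, card_erase_of_mem (by simp), ← hp.natCard_dualAnnihilator hV,
    Nat.card_eq_fintype_card, Fintype.card_subtype]

end LevelSets

section TupleCounting

theorem card_mul_tsub_le_card_of_forall_cons_mem {α : Type*} {n D : ℕ} {A : Finset α}
    {S : Finset (Fin n → α)} {T : Finset (Fin (n + 1) → α)} (B : (Fin n → α) → α → Prop)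
    [∀ p, DecidablePred (B p)] (hB : ∀ p ∈ S, #{x ∈ A | B p x} ≤ D)
    (hcons : ∀ p ∈ S, ∀ x ∈ A, ¬ B p x → Fin.cons x p ∈ T) : #S * (#A - D) ≤ #T := by
  calc #S * (#A - D) ≤ ∑ p ∈ S, #{x ∈ A | ¬ B p x} := by
        rw [← smul_eq_mul]
        refine card_nsmul_le_sum _ _ _ fun p hp ↦ ?_
        have hsplit := card_filter_add_card_filter_not (s := A) (B p)
        rw [tsub_le_iff_left, ← hsplit]
        gcongr
        exact hB p hp
    _ = #(S.sigma fun p ↦ {x ∈ A | ¬ B p x}) := (card_sigma _ _).symm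
    _ ≤ #T := by
        refine card_le_card_of_injOn (fun s ↦ Fin.cons s.2 s.1) ?_ ?_
        · rintro ⟨p, x⟩ hs
          obtain ⟨hp, hx⟩ := mem_sigma.1 hs
          exact hcons p hp x (mem_filter.1 hx).1 (mem_filter.1 hx).2
        · rintro ⟨p, x⟩ - ⟨p', x'⟩ - h
          obtain ⟨rfl, rfl⟩ := Fin.cons_inj.1 h
          rfl

theorem cons_mem_piFinset_const {α : Type*} {n : ℕ} {A : Finset α} {x : α} {p : Fin n → α} :
    (Fin.cons x p : Fin (n + 1) → α) ∈ Fintype.piFinset (fun _ ↦ A) ↔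
      x ∈ A ∧ p ∈ Fintype.piFinset fun _ ↦ A := by
  simp [Fin.forall_fin_succ]

variable {k V P : Type*} [DivisionRing k] [Finite k] [AddCommGroup V] [Module k V] [AddTorsor V P]

variable (k) in
open scoped Classical in
theorem tsub_pow_le_card_affineIndependent (A : Finset P) {m n : ℕ} (hm : m ≤ n + 2) :
    (#A - Nat.card k ^ n) ^ m ≤
      #{p ∈ Fintype.piFinset fun _ : Fin m ↦ A | AffineIndependent k p} := by
  induction m with
  | zero => simp [affineIndependent_of_subsingleton]
  | succ m ih =>
    rw [pow_succ]
    refine (Nat.mul_le_mul_right _ (ih (by omega))).trans ?_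
    refine card_mul_tsub_le_card_of_forall_cons_mem (fun p x ↦ x ∈ affineSpan k (Set.range p))
      (fun p _ ↦ card_filter_mem_affineSpan_range_le A p (by simpa using hm))
      fun p hp x hxA hx ↦ ?_
    obtain ⟨hpA, hind⟩ := mem_filter.1 hp
    exact mem_filter.2
      ⟨cons_mem_piFinset_const.2 ⟨hxA, hpA⟩, affineIndependent_fin_cons hind hx⟩

variable (k) in
open scoped Classical in
theorem tsub_pow_le_card_affineIndependent_comp_succAbove (A : Finset P) (n : ℕ) :
    (#A - (n + 2) * Nat.card k ^ n) ^ (n + 3) ≤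
      #{p ∈ Fintype.piFinset fun _ : Fin (n + 3) ↦ A |
        ∀ i : Fin (n + 3), AffineIndependent k (p ∘ i.succAbove)} := by
  have hind : (#A - (n + 2) * Nat.card k ^ n) ^ (n + 2) ≤
      #{p ∈ Fintype.piFinset fun _ : Fin (n + 2) ↦ A | AffineIndependent k p} :=
    (Nat.pow_le_pow_left (Nat.sub_le_sub_left (Nat.le_mul_of_pos_left _ (by omega)) _) _).trans
      (tsub_pow_le_card_affineIndependent k A le_rfl)
  rw [pow_succ]
  refine (Nat.mul_le_mul_right _ hind).trans ?_
  refine card_mul_tsub_le_card_of_forall_cons_mem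
    (fun p x ↦ ∃ i : Fin (n + 2), x ∈ affineSpan k (Set.range (p ∘ i.succAbove)))
    (fun p _ ↦ ?_) fun p hp x hxA hx ↦ ?_
  · have hunion : ({x ∈ A | ∃ i : Fin (n + 2), x ∈ affineSpan k (Set.range (p ∘ i.succAbove))} =
        univ.biUnion fun i : Fin (n + 2) ↦
          {x ∈ A | x ∈ affineSpan k (Set.range (p ∘ i.succAbove))}) := by
      ext x
      simp
    rw [hunion]
    refine (card_biUnion_le_card_mul _ _ (Nat.card k ^ n) fun i _ ↦ ?_).trans_eq (by simp)
    exact card_filter_mem_affineSpan_range_le A (p ∘ i.succAbove) (Fintype.card_fin _).le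
  · obtain ⟨hpA, hind⟩ := mem_filter.1 hp
    exact mem_filter.2 ⟨cons_mem_piFinset_const.2 ⟨hxA, hpA⟩,
      affineIndependent_fin_cons_comp_succAbove hind (not_exists.1 hx)⟩

end TupleCounting

section CircuitCounting

variable {k V : Type*} [Field k] [AddCommGroup V] [Module k V] {n : ℕ}

variable (k) in
open scoped Classical in
/-- The affine circuits with `n + 1` entries from `A`. Edges of the hypergraph are counted through
these ordered tuples because a tuple can be built up one point at a time. -/
noncomputable def affineCircuits (A : Finset V) (n : ℕ) : Finset (Fin (n + 1) → V) :=
  {p ∈ Fintype.piFinset fun _ ↦ A | IsAffineCircuit k p}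

theorem mem_affineCircuits {A : Finset V} {p : Fin (n + 1) → V} :
    p ∈ affineCircuits k A n ↔ (∀ i, p i ∈ A) ∧ IsAffineCircuit k p := by
  simp [affineCircuits]

variable [Finite k]

open scoped Classical in
theorem tsub_pow_le_card_affineCircuits_levelSet (hV : finrank k V = n + 2) (A : Finset V)
    {a : Dual k V} (ha : a ≠ 0) (b : k) :
    (#{x ∈ A | a x = b} - (n + 2) * Nat.card k ^ n) ^ (n + 3) ≤
      #{p ∈ affineCircuits k A (n + 2) | ∀ i, a (p i) = b} := by
  have : FiniteDimensional k V := .of_finrank_eq_succ hV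
  refine (tsub_pow_le_card_affineIndependent_comp_succAbove k _ n).trans
    (card_le_card fun p hp ↦ ?_)
  simp only [mem_filter, Fintype.mem_piFinset] at hp
  obtain ⟨hpA, hind⟩ := hp
  have hdep : ¬ AffineIndependent k p :=
    not_affineIndependent_of_dual_const ha (by simp [hV]) fun i j ↦ by rw [(hpA i).2, (hpA j).2]
  exact mem_filter.2
    ⟨mem_affineCircuits.2 ⟨fun i ↦ (hpA i).1, hdep, hind⟩, fun i ↦ (hpA i).2⟩

open scoped Classical in
theorem tsub_pow_le_card_affineCircuits_dual_const (hV : finrank k V = n + 2) (A : Finset V)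
    {a : Dual k V} (ha : a ≠ 0) :
    (#A - (n + 2) * Nat.card k ^ (n + 1)) ^ (n + 3) ≤
      Nat.card k ^ (n + 2) * #{p ∈ affineCircuits k A (n + 2) | ∀ i j, a (p i) = a (p j)} := by
  have := Fintype.ofFinite k
  set D := (n + 2) * Nat.card k ^ n with hD
  have hsum : #A - (n + 2) * Nat.card k ^ (n + 1) ≤ ∑ b, (#{x ∈ A | a x = b} - D) := by
    have hlevel : #A = ∑ b, #{x ∈ A | a x = b} :=
      card_eq_sum_card_fiberwise fun _ _ ↦ mem_coe.2 (mem_univ _)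
    calc #A - (n + 2) * Nat.card k ^ (n + 1) = ∑ b, #{x ∈ A | a x = b} - ∑ _b : k, D := by
          simp only [← hlevel, sum_const, card_univ, smul_eq_mul, hD, Nat.card_eq_fintype_card]
          ring_nf
      _ ≤ ∑ b, (#{x ∈ A | a x = b} - D) := by
          rw [tsub_le_iff_right, ← sum_add_distrib]
          exact sum_le_sum fun b _ ↦ le_tsub_add
  calc (#A - (n + 2) * Nat.card k ^ (n + 1)) ^ (n + 3)
      ≤ (∑ b, (#{x ∈ A | a x = b} - D)) ^ (n + 3) := by gcongr
    _ ≤ Nat.card k ^ (n + 2) * ∑ b, (#{x ∈ A | a x = b} - D) ^ (n + 3) := by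
        simpa using pow_sum_le_card_mul_sum_pow (s := univ)
          (f := fun b ↦ #{x ∈ A | a x = b} - D) (fun _ _ ↦ Nat.zero_le _) (n + 2)
    _ ≤ Nat.card k ^ (n + 2) * ∑ b, #{p ∈ affineCircuits k A (n + 2) | ∀ i, a (p i) = b} := by
        gcongr with b
        exact tsub_pow_le_card_affineCircuits_levelSet hV A ha b
    _ = Nat.card k ^ (n + 2) * #{p ∈ affineCircuits k A (n + 2) | ∀ i j, a (p i) = a (p j)} := by
        rw [card_eq_sum_card_fiberwise (f := fun p ↦ a (p 0)) (t := univ)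
          fun _ _ ↦ mem_coe.2 (mem_univ _)]
        congr! 3 with b
        ext p
        simp only [mem_filter, and_assoc, and_congr_right_iff]
        intro _
        exact ⟨fun h ↦ ⟨fun i j ↦ by rw [h, h], h 0⟩, fun h i ↦ (h.1 i 0).trans h.2⟩

open scoped Classical in
theorem pow_sub_one_mul_tsub_pow_le_card_affineCircuits (hV : finrank k V = n + 2)
    (A : Finset V) :
    (Nat.card k ^ (n + 2) - 1) * (#A - (n + 2) * Nat.card k ^ (n + 1)) ^ (n + 3) ≤
      Nat.card k ^ (n + 2) * (#(affineCircuits k A (n + 2)) * (Nat.card k - 1)) := by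
  have : FiniteDimensional k V := .of_finrank_eq_succ hV
  have : Finite (Dual k V) := Module.finite_of_finite k
  have := Fintype.ofFinite (Dual k V)
  let const (a : Dual k V) (p : Fin (n + 3) → V) : Prop := ∀ i j, a (p i) = a (p j)
  let duals : Finset (Dual k V) := univ.erase 0
  let circuits : Finset (Fin (n + 3) → V) := affineCircuits k A (n + 2)
  have hcard : #duals = Nat.card k ^ (n + 2) - 1 := by
    rw [card_erase_of_mem (mem_univ _), card_univ, ← Nat.card_eq_fintype_card,
      natCard_eq_pow_finrank (K := k), Subspace.dual_finrank_eq, hV]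
  calc (Nat.card k ^ (n + 2) - 1) * (#A - (n + 2) * Nat.card k ^ (n + 1)) ^ (n + 3)
      ≤ ∑ a ∈ duals, Nat.card k ^ (n + 2) * #(circuits.bipartiteAbove const a) := by
        rw [← hcard, ← smul_eq_mul]
        exact card_nsmul_le_sum _ _ _ fun a ha ↦
          tsub_pow_le_card_affineCircuits_dual_const hV A (ne_of_mem_erase ha)
    _ = Nat.card k ^ (n + 2) * ∑ p ∈ circuits, #(duals.bipartiteBelow const p) := by
        rw [← mul_sum, sum_card_bipartiteAbove_eq_sum_card_bipartiteBelow]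
    _ = Nat.card k ^ (n + 2) * (#circuits * (Nat.card k - 1)) := by
        congr 1
        exact sum_const_nat fun p hp ↦ (mem_affineCircuits.1 hp).2.card_dual_ne_zero_const hV

theorem tsub_pow_le_card_affineCircuits (hV : finrank k V = n + 2) (A : Finset V) :
    (#A - (n + 2) * Nat.card k ^ (n + 1)) ^ (n + 3) ≤
      Nat.card k * #(affineCircuits k A (n + 2)) := by
  have hq : 1 < Nat.card k := Finite.one_lt_card
  have hcancel : Nat.card k ^ (n + 2) * (Nat.card k - 1) ≤
      (Nat.card k ^ (n + 2) - 1) * Nat.card k := by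
    rw [Nat.mul_sub_one, Nat.sub_one_mul]
    exact Nat.sub_le_sub_left (Nat.le_self_pow (by omega) _) _
  have hpos : 0 < Nat.card k ^ (n + 2) - 1 :=
    Nat.sub_pos_of_lt (Nat.one_lt_pow (n + 1).succ_ne_zero hq)
  refine Nat.le_of_mul_le_mul_left ?_ hpos
  calc (Nat.card k ^ (n + 2) - 1) * (#A - (n + 2) * Nat.card k ^ (n + 1)) ^ (n + 3)
      ≤ Nat.card k ^ (n + 2) * (Nat.card k - 1) * #(affineCircuits k A (n + 2)) :=
        (pow_sub_one_mul_tsub_pow_le_card_affineCircuits hV A).trans_eq (by ring)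
    _ ≤ (Nat.card k ^ (n + 2) - 1) * Nat.card k * #(affineCircuits k A (n + 2)) := by gcongr
    _ = (Nat.card k ^ (n + 2) - 1) * (Nat.card k * #(affineCircuits k A (n + 2))) :=
        mul_assoc _ _ _

end CircuitCounting

section CriticalEdges

variable {F : Type*} [Field F] {n : ℕ}

theorem IsAffineCircuit.isCriticalCoplanar_image [DecidableEq F]
    {p : Fin (n + 3) → Fin (n + 2) → F} (hp : IsAffineCircuit F p) :
    IsCriticalCoplanar F (n + 2) (univ.image p) := by
  refine ⟨?_, fun h ↦ hp.1 ?_, fun s hs ↦ ?_⟩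
  · rw [card_image_of_injective _ hp.injective, card_univ, Fintype.card_fin]
  · let e : Fin (n + 3) ↪ univ.image p :=
      ⟨fun i ↦ ⟨p i, mem_image_of_mem p (mem_univ i)⟩,
        fun i j h ↦ hp.injective (Subtype.mk.inj h)⟩
    exact h.comp_embedding e
  · obtain ⟨x, hx, hxs⟩ := exists_of_ssubset hs
    obtain ⟨i, -, rfl⟩ := mem_image.1 hx
    refine (hp.2 i).range.mono fun y hy ↦ ?_
    obtain ⟨j, -, rfl⟩ := mem_image.1 (hs.subset hy)
    obtain ⟨l, rfl⟩ := Fin.exists_succAbove_eq fun h : j = i ↦ hxs (h ▸ hy)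
    exact ⟨l, rfl⟩

theorem IsCriticalCoplanar.mem_affineSpan_erase [DecidableEq F] {d : ℕ}
    {t : Finset (Fin d → F)} (ht : IsCriticalCoplanar F d t) {x : Fin d → F} (hx : x ∈ t) :
    x ∈ affineSpan F (t.erase x : Set (Fin d → F)) := by
  by_contra hspan
  exact ht.2.1 (affineIndependent_coe_of_erase hx (ht.2.2 _ (erase_ssubset hx)) hspan)

theorem finite_criticalEdges (d : ℕ) (A : Finset (Fin d → F)) : (criticalEdges F d A).Finite :=
  A.powerset.finite_toSet.subset fun _ ht ↦ mem_coe.2 (mem_powerset.2 ht.1)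

theorem card_affineCircuits_le (A : Finset (Fin (n + 2) → F)) :
    #(affineCircuits F A (n + 2)) ≤ (n + 3) ^ (n + 3) * (criticalEdges F (n + 2) A).ncard := by
  classical
  have hfin := finite_criticalEdges (n + 2) A
  rw [Set.ncard_eq_toFinset_card _ hfin]
  refine card_le_mul_card_image_of_maps_to (f := fun p ↦ univ.image p) (fun p hp ↦ ?_) _
    fun t ht ↦ ?_
  · obtain ⟨hpA, hp⟩ := mem_affineCircuits.1 hp
    exact hfin.mem_toFinset.2
      ⟨image_subset_iff.2 fun i _ ↦ hpA i, hp.isCriticalCoplanar_image⟩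
  · have htcard : #t = n + 3 := (hfin.mem_toFinset.1 ht).2.1
    suffices h : {p ∈ affineCircuits F A (n + 2) | univ.image p = t} ⊆
        Fintype.piFinset fun _ ↦ t by
      simpa [htcard] using card_le_card h
    intro p hp
    refine Fintype.mem_piFinset.2 fun i ↦ ?_
    rw [← (mem_filter.1 hp).2]
    exact mem_image_of_mem p (mem_univ i)

theorem card_pow_le_mul_ncard_criticalEdges [Finite F] {A : Finset (Fin (n + 2) → F)}
    (hA : 2 * ((n + 2) * Nat.card F ^ (n + 1)) ≤ #A) :
    #A ^ (n + 3) ≤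
      (2 * (n + 3)) ^ (n + 3) * (Nat.card F * (criticalEdges F (n + 2) A).ncard) := by
  calc #A ^ (n + 3) ≤ (2 * (#A - (n + 2) * Nat.card F ^ (n + 1))) ^ (n + 3) := by
        gcongr
        omega
    _ ≤ 2 ^ (n + 3) * (Nat.card F * #(affineCircuits F A (n + 2))) := by
        rw [mul_pow]
        gcongr
        exact tsub_pow_le_card_affineCircuits (finrank_fin_fun F) A
    _ ≤ 2 ^ (n + 3) *
          (Nat.card F * ((n + 3) ^ (n + 3) * (criticalEdges F (n + 2) A).ncard)) := by
        gcongr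
        exact card_affineCircuits_le A
    _ = (2 * (n + 3)) ^ (n + 3) * (Nat.card F * (criticalEdges F (n + 2) A).ncard) := by
        rw [mul_pow]
        ring

theorem ncard_criticalEdges_superset_le [Finite F] {j : ℕ} {A U : Finset (Fin (n + 1) → F)}
    (hU : #U + j = n + 1) :
    {t ∈ criticalEdges F (n + 1) A | U ⊆ t}.ncard ≤ #A ^ j * Nat.card F ^ n := by
  classical
  let completions (R : Finset (Fin (n + 1) → F)) : Finset (Finset (Fin (n + 1) → F)) :=
    {x ∈ A | x ∈ affineSpan F (Set.range ((↑) : ↥(U ∪ R) → Fin (n + 1) → F))}.image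
      fun x ↦ insert x (U ∪ R)
  have hcover : {t ∈ criticalEdges F (n + 1) A | U ⊆ t} ⊆
      ((A.powersetCard j).biUnion completions : Set (Finset (Fin (n + 1) → F))) := by
    rintro t ⟨⟨htA, ht⟩, hUt⟩
    have htcard : #t = n + 1 + 1 := ht.1
    obtain ⟨x, hxt, hxU⟩ : ∃ x ∈ t, x ∉ U := exists_mem_notMem_of_card_lt_card (by omega)
    have hUx : U ⊆ t.erase x := subset_erase.2 ⟨hUt, hxU⟩
    have hunion : U ∪ t.erase x \ U = t.erase x := union_sdiff_of_subset hUx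
    refine mem_coe.2 (mem_biUnion.2 ⟨t.erase x \ U, mem_powersetCard.2 ⟨?_, ?_⟩,
      mem_image.2 ⟨x, mem_filter.2 ⟨htA hxt, ?_⟩, ?_⟩⟩)
    · exact sdiff_subset.trans ((erase_subset x t).trans htA)
    · rw [card_sdiff_of_subset hUx, card_erase_of_mem hxt]
      omega
    · rw [hunion, Subtype.range_coe]
      exact ht.mem_affineSpan_erase hxt
    · rw [hunion, insert_erase hxt]
  have hcompletions : ∀ R ∈ A.powersetCard j, #(completions R) ≤ Nat.card F ^ n := by
    intro R hR
    refine card_image_le.trans (card_filter_mem_affineSpan_range_le A _ ?_)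
    have hRcard : #R = j := (mem_powersetCard.1 hR).2
    rw [Fintype.card_coe]
    exact (card_union_le U R).trans (by omega)
  calc {t ∈ criticalEdges F (n + 1) A | U ⊆ t}.ncard
      ≤ #((A.powersetCard j).biUnion completions) := by
        rw [← Set.ncard_coe_finset]
        exact Set.ncard_le_ncard hcover (finite_toSet _)
    _ ≤ #(A.powersetCard j) * Nat.card F ^ n := card_biUnion_le_card_mul _ _ _ hcompletions
    _ ≤ #A ^ j * Nat.card F ^ n := by
        rw [card_powersetCard]
        gcongr
        exact Nat.choose_le_pow _ _

theorem ncard_criticalEdges_superset_le_one {d : ℕ} {A U : Finset (Fin d → F)}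
    (hU : #U = d + 1) : {t ∈ criticalEdges F d A | U ⊆ t}.ncard ≤ 1 := by
  rw [Set.ncard_le_one ((finite_criticalEdges d A).subset (Set.sep_subset _ _))]
  have heq : ∀ t ∈ {t ∈ criticalEdges F d A | U ⊆ t}, U = t := fun t ht ↦
    eq_of_subset_of_card_le ht.2 (by rw [hU, ht.1.2.1])
  exact fun s hs t ht ↦ (heq s hs).symm.trans (heq t ht)

end CriticalEdges

section Boundedness

theorem rpow_le_pow_mul_of_inv_div_pow_mul_rpow_sub_le {N q s τ : ℝ} {m : ℕ} (hN : 0 < N)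
    (hq : 0 < q) (hτ : (N / q)⁻¹ ^ m * q ^ (s - m) ≤ τ) : q ^ s ≤ N ^ m * τ := by
  calc q ^ s = N ^ m * ((N / q)⁻¹ ^ m * q ^ (s - m)) := by
        rw [Real.rpow_sub_natCast hq.ne', inv_div, div_pow]
        field_simp
    _ ≤ N ^ m * τ := by gcongr

theorem le_mul_pow_of_inv_div_mul_rpow_sub_le {N q τ : ℝ} {d : ℕ} (hN : 0 < N) (hq : 0 < q)
    (hd : d ≠ 0) (hτ : (N / q)⁻¹ * q ^ ((1 : ℝ) / d - 1) ≤ τ) : q ≤ (N * τ) ^ d := by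
  have hroot : q ^ ((1 : ℝ) / d) ≤ N * τ := by
    simpa using rpow_le_pow_mul_of_inv_div_pow_mul_rpow_sub_le (m := 1) hN hq (by simpa using hτ)
  calc q = (q ^ ((1 : ℝ) / d)) ^ d := by rw [one_div, Real.rpow_inv_natCast_pow hq.le hd]
    _ ≤ (N * τ) ^ d := by gcongr

theorem le_pow_mul_pow_of_le_sq_mul {R : Type*} [CommSemiring R] [LinearOrder R]
    [IsStrictOrderedRing R] {N Q τ : R} (hN : 0 < N) (hNQ : N ≤ Q) (hτ : Q ≤ N ^ 2 * τ) (m : ℕ) :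
    Q ≤ N ^ (m + 2) * τ ^ (m + 1) := by
  have hQ : 0 < Q := hN.trans_le hNQ
  refine le_of_mul_le_mul_left ?_ (pow_pos hN m)
  calc N ^ m * Q ≤ Q ^ m * Q := by gcongr
    _ = Q ^ (m + 1) := (pow_succ Q m).symm
    _ ≤ (N ^ 2 * τ) ^ (m + 1) := by gcongr
    _ = N ^ m * (N ^ (m + 2) * τ ^ (m + 1)) := by ring

variable {F : Type*} [Field F] [Finite F] {n : ℕ} {A U : Finset (Fin (n + 2) → F)} {τ : ℝ}

theorem ncard_criticalEdges_superset_mul_le (hA : A.Nonempty) (hU₂ : 2 ≤ #U) (hUn : #U ≤ n + 3)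
    (hτ₁ : (Nat.card F : ℝ) ≤ (#A * τ) ^ (n + 2))
    (hτ₂ : (Nat.card F : ℝ) ^ (n + 2) ≤ (#A : ℝ) ^ 2 * τ) :
    ({t ∈ criticalEdges F (n + 2) A | U ⊆ t}.ncard : ℝ) * Nat.card F ≤
      (#A : ℝ) ^ (n + 2) * τ ^ (#U - 1) := by
  obtain hU | hU := hUn.eq_or_lt
  · have hdeg : ({t ∈ criticalEdges F (n + 2) A | U ⊆ t}.ncard : ℝ) ≤ 1 :=
      mod_cast ncard_criticalEdges_superset_le_one hU
    calc ({t ∈ criticalEdges F (n + 2) A | U ⊆ t}.ncard : ℝ) * Nat.card F ≤ Nat.card F :=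
          mul_le_of_le_one_left (Nat.cast_nonneg _) hdeg
      _ ≤ (#A : ℝ) ^ (n + 2) * τ ^ (#U - 1) := by simpa [hU, ← mul_pow] using hτ₁
  · obtain ⟨m, hm⟩ := Nat.exists_eq_add_of_le' hU₂
    obtain ⟨j, hj⟩ := Nat.exists_eq_add_of_le (Nat.le_of_lt_succ hU)
    have hexp : j + (m + 2) = n + 2 := by omega
    have hdeg : ({t ∈ criticalEdges F (n + 2) A | U ⊆ t}.ncard : ℝ) ≤
        (#A : ℝ) ^ j * (Nat.card F : ℝ) ^ (n + 1) :=
      mod_cast ncard_criticalEdges_superset_le hj.symm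
    have hAcard : (#A : ℝ) ≤ (Nat.card F : ℝ) ^ (n + 2) := by
      have := Fintype.ofFinite F
      have hcard : #A ≤ Nat.card F ^ (n + 2) := by simpa using card_le_univ A
      exact_mod_cast hcard
    calc ({t ∈ criticalEdges F (n + 2) A | U ⊆ t}.ncard : ℝ) * Nat.card F
        ≤ (#A : ℝ) ^ j * (Nat.card F : ℝ) ^ (n + 1) * Nat.card F := by gcongr
      _ = (#A : ℝ) ^ j * (Nat.card F : ℝ) ^ (n + 2) := by ring
      _ ≤ (#A : ℝ) ^ j * ((#A : ℝ) ^ (m + 2) * τ ^ (m + 1)) := by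
          gcongr
          exact le_pow_mul_pow_of_le_sq_mul (mod_cast hA.card_pos) hAcard hτ₂ m
      _ = (#A : ℝ) ^ (n + 2) * τ ^ (#U - 1) := by
          rw [← mul_assoc, ← pow_add, hexp, hm, Nat.add_succ_sub_one]

theorem ncard_criticalEdges_superset_le_mul_div
    (hA : 2 * ((n + 2) * Nat.card F ^ (n + 1)) ≤ #A) (hU₂ : 2 ≤ #U) (hUn : #U ≤ n + 3)
    (hτ₁ : (Nat.card F : ℝ) ≤ (#A * τ) ^ (n + 2))
    (hτ₂ : (Nat.card F : ℝ) ^ (n + 2) ≤ (#A : ℝ) ^ 2 * τ) :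
    ({t ∈ criticalEdges F (n + 2) A | U ⊆ t}.ncard : ℝ) ≤
      (2 * (n + 3)) ^ (n + 3) * ((criticalEdges F (n + 2) A).ncard / #A) * τ ^ (#U - 1) := by
  have hq : 0 < Nat.card F := Nat.card_pos
  have hApos : 0 < #A := lt_of_lt_of_le (by positivity) hA
  have hτ : 0 ≤ τ := by
    have hpos : (0 : ℝ) < (Nat.card F : ℝ) ^ (n + 2) := by positivity
    exact (pos_of_mul_pos_right (hpos.trans_le hτ₂) (sq_nonneg _)).le
  have hdeg := ncard_criticalEdges_superset_mul_le (card_pos.1 hApos) hU₂ hUn hτ₁ hτ₂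
  have hedges : (#A : ℝ) ^ (n + 3) ≤
      (2 * (n + 3)) ^ (n + 3) * (Nat.card F * (criticalEdges F (n + 2) A).ncard) :=
    mod_cast card_pow_le_mul_ncard_criticalEdges hA
  have hqA : (0 : ℝ) < Nat.card F * #A := by positivity
  refine le_of_mul_le_mul_right ?_ hqA
  calc ({t ∈ criticalEdges F (n + 2) A | U ⊆ t}.ncard : ℝ) * (Nat.card F * #A)
      = {t ∈ criticalEdges F (n + 2) A | U ⊆ t}.ncard * Nat.card F * #A :=
        (mul_assoc _ _ _).symm
    _ ≤ (#A : ℝ) ^ (n + 2) * τ ^ (#U - 1) * #A := by gcongr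
    _ = (#A : ℝ) ^ (n + 3) * τ ^ (#U - 1) := by ring
    _ ≤ (2 * (n + 3)) ^ (n + 3) * (Nat.card F * (criticalEdges F (n + 2) A).ncard) *
          τ ^ (#U - 1) := by gcongr
    _ = (2 * (n + 3)) ^ (n + 3) * ((criticalEdges F (n + 2) A).ncard / #A) * τ ^ (#U - 1) *
          (Nat.card F * #A) := by field_simp

end Boundedness

/-- For `|P| ≥ 4d·q^{d−1}`, the hypergraph of critical coplanar
`(d+1)`-tuples in `P` is `(c,τ)`-bounded with `k = |P|/q` and
`τ = max{k⁻¹·q^{1/d − 1}, k⁻²·q^{d−2}}`: for every `2 ≤ i ≤ d+1`, every `i`-element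
subset `U` of `P` is contained in at most `c·(|H|/|P|)·τ^{i−1}` edges. -/
theorem critical_coplanar_hypergraph_bounded (d : ℕ) (hd : 2 ≤ d) :
    ∃ c : ℝ, 0 < c ∧ ∀ q : ℕ, IsPrimePow q →
      ∀ (F : Type) [Field F] [Fintype F], Fintype.card F = q →
        ∀ P : Finset (Fin d → F), 4 * d * q ^ (d - 1) ≤ P.card →
          ∀ i : ℕ, 2 ≤ i → i ≤ d + 1 →
            ∀ U : Finset (Fin d → F), U ⊆ P → U.card = i →
              (({t ∈ criticalEdges F d P | U ⊆ t}).ncard : ℝ) ≤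
                c * (((criticalEdges F d P).ncard : ℝ) / (P.card : ℝ)) *
                  (max (((P.card : ℝ) / (q : ℝ))⁻¹ * (q : ℝ) ^ ((1 : ℝ) / (d : ℝ) - 1))
                    ((((P.card : ℝ) / (q : ℝ))⁻¹) ^ 2 *
                      (q : ℝ) ^ ((d : ℝ) - 2))) ^ (i - 1) := by
  obtain ⟨n, rfl⟩ := Nat.exists_eq_add_of_le' hd
  refine ⟨(2 * (n + 3)) ^ (n + 3), by positivity, ?_⟩
  rintro q - F _ _ hF P hP i hi₂ hid U - rfl
  rw [← Nat.card_eq_fintype_card] at hF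
  subst hF
  have hlarge : 2 * ((n + 2) * Nat.card F ^ (n + 1)) ≤ #P := by
    refine le_trans ?_ hP
    rw [mul_assoc]
    exact Nat.mul_le_mul_right _ (by norm_num)
  have hq : 0 < Nat.card F := Nat.card_pos
  have hq₀ : (0 : ℝ) < Nat.card F := mod_cast hq
  have hP₀ : (0 : ℝ) < #P := mod_cast lt_of_lt_of_le (by positivity) hlarge
  refine ncard_criticalEdges_superset_le_mul_div hlarge hi₂ hid ?_ ?_
  · exact le_mul_pow_of_inv_div_mul_rpow_sub_le hP₀ hq₀ (n + 1).succ_ne_zero (le_max_left _ _)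
  · rw [← Real.rpow_natCast]
    exact rpow_le_pow_mul_of_inv_div_pow_mul_rpow_sub_le hP₀ hq₀ (le_max_right _ _)
end
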